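/- arXiv:1004.0323 — 2 statements merged into one kernel-verified Lean document; each statement's English description precedes it below -/
import Mathlib

section
/- Let f be a +proper closed relation on a locally compact, σ-compact Hausdorff space X, let X̂ be a compact Hausdorff space containing X as a dense open subspace, let f̂ be the closure of f in X̂ × X̂, and assume (1_{X̂} ∪ 𝒢f̂) ∩ (X × X) = 1_X ∪ 𝒢f (almost dynamic). Then the compactification is dynamic: 𝒢f̂ ∩ (X × X) = 𝒢f. Moreover, if ẑ ∈ X̂ satisfies (ẑ,ẑ) ∈ 𝒢f̂ and Ê = {w ∈ X̂ | (ẑ,w) ∈ 𝒢f̂ and (w,ẑ) ∈ 𝒢f̂} with E = Ê ∩ X, then exactly one of the following holds: (i) Ê ⊆ X̂ ∖ X and E = ∅; (ii) E is a non-compact set, there is x ∈ E with (x,x) ∈ 𝒢f and E = {w ∈ X | (x,w) ∈ 𝒢f and (w,x) ∈ 𝒢f}, and the closure of E in X̂ meets X̂ ∖ X and is contained in Ê; (iii) Ê = E is compact, and there is x ∈ E with (x,x) ∈ 𝒢f and E = {w ∈ X | (x,w) ∈ 𝒢f and (w,x) ∈ 𝒢f}. -/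
/-- The image of a set `A` under a relation `f ⊆ X × Y`. -/
def relImage {X Y : Type*} (f : Set (X × Y)) (A : Set X) : Set Y :=
  {y | ∃ x ∈ A, (x, y) ∈ f}

/-- The reverse (inverse) relation of `f ⊆ X × Y`. -/
def relInv {X Y : Type*} (f : Set (X × Y)) : Set (Y × X) :=
  {p | (p.2, p.1) ∈ f}

/-- Composition of relations: `relComp g f = g ∘ f` (first `f`, then `g`). -/
def relComp {X Y Z : Type*} (g : Set (Y × Z)) (f : Set (X × Y)) : Set (X × Z) :=
  {p | ∃ y, (p.1, y) ∈ f ∧ (y, p.2) ∈ g}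

/-- A relation on `X` is transitive. -/
def RelTrans {X : Type*} (f : Set (X × X)) : Prop :=
  ∀ x y z : X, (x, y) ∈ f → (y, z) ∈ f → (x, z) ∈ f

/-- `gRel f` is the smallest closed transitive relation containing `f`:
the intersection of all closed transitive relations containing `f`. -/
def gRel {X : Type*} [TopologicalSpace X] (f : Set (X × X)) : Set (X × X) :=
  ⋂₀ {g : Set (X × X) | f ⊆ g ∧ IsClosed g ∧ RelTrans g}

theorem gRel_sub {X : Type*} [TopologicalSpace X] (f : Set (X × X)) : f ⊆ gRel f :=
  fun _ hp _ hg => hg.1 hp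

theorem gRel_closed {X : Type*} [TopologicalSpace X] (f : Set (X × X)) : IsClosed (gRel f) :=
  isClosed_sInter fun _ hg => hg.2.1

theorem gRel_trans {X : Type*} [TopologicalSpace X] (f : Set (X × X)) : RelTrans (gRel f) :=
  fun x y z h1 h2 g hg => hg.2.2 x y z (h1 g hg) (h2 g hg)

theorem gRel_min {X : Type*} [TopologicalSpace X] {f g : Set (X × X)} (h1 : f ⊆ g)
    (h2 : IsClosed g) (h3 : RelTrans g) : gRel f ⊆ g :=
  fun _ hp => hp g ⟨h1, h2, h3⟩

/-- Composition through a closed set is closed, in a compact space. -/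
theorem comp_closed {X : Type*} [TopologicalSpace X] [CompactSpace X]
    {f g : Set (X × X)} (hf : IsClosed f) (hg : IsClosed g) {R : Set X} (hR : IsClosed R) :
    IsClosed {p : X × X | ∃ r ∈ R, (p.1, r) ∈ f ∧ (r, p.2) ∈ g} := by
  have hc : IsClosed {q : (X × X) × X | q.2 ∈ R ∧ (q.1.1, q.2) ∈ f ∧ (q.2, q.1.2) ∈ g} := by
    refine (hR.preimage continuous_snd).inter (IsClosed.inter ?_ ?_)
    · exact hf.preimage (f := fun q : (X × X) × X => (q.1.1, q.2)) (by fun_prop)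
    · exact hg.preimage (f := fun q : (X × X) × X => (q.2, q.1.2)) (by fun_prop)
  have := isClosedMap_fst_of_compactSpace _ hc
  convert this using 1
  ext p
  simp

theorem gRel_step {X : Type*} [TopologicalSpace X] [CompactSpace X]
    {f : Set (X × X)} (hf : IsClosed f) {a b : X} (h : (a, b) ∈ gRel f) :
    (a, b) ∈ f ∨ ∃ c, (a, c) ∈ f ∧ (c, b) ∈ gRel f := by
  have key : gRel f ⊆ f ∪ {p : X × X | ∃ r ∈ (Set.univ : Set X), (p.1, r) ∈ f ∧ (r, p.2) ∈ gRel f} := by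
    refine gRel_min Set.subset_union_left
      (hf.union (comp_closed hf (gRel_closed f) isClosed_univ)) ?_
    intro x y z h1 h2
    have h2' : (y, z) ∈ gRel f := by
      rcases h2 with h2 | ⟨r, -, hr1, hr2⟩
      · exact gRel_sub f h2
      · exact gRel_trans f _ _ _ (gRel_sub f hr1) hr2
    rcases h1 with h1 | ⟨r, -, hr1, hr2⟩
    · exact Or.inr ⟨y, trivial, h1, h2'⟩
    · exact Or.inr ⟨r, trivial, hr1, gRel_trans f _ _ _ hr2 h2'⟩
  rcases key h with h | ⟨r, -, hr⟩
  · exact Or.inl h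
  · exact Or.inr ⟨r, hr⟩

theorem gRel_pass {X : Type*} [TopologicalSpace X] [CompactSpace X]
    {f : Set (X × X)} {V W : Set X} (hV : IsOpen V) (hW : IsOpen W)
    (hVW : V ×ˢ W ⊆ fᶜ) {a b : X} (h : (a, b) ∈ gRel f) (ha : a ∈ V) (hb : b ∈ W) :
    ∃ r ∈ (V ∪ W)ᶜ, (a, r) ∈ gRel f ∧ (r, b) ∈ gRel f := by
  have key : gRel f ⊆ gRel f ∩ ((V ×ˢ W)ᶜ ∪
      {p : X × X | ∃ r ∈ (V ∪ W)ᶜ, (p.1, r) ∈ gRel f ∧ (r, p.2) ∈ gRel f}) := by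
    refine gRel_min (fun p hp => ⟨gRel_sub f hp, Or.inl fun hp' => hVW hp' hp⟩) ?_ ?_
    · exact (gRel_closed f).inter ((hV.prod hW).isClosed_compl.union
        (comp_closed (gRel_closed f) (gRel_closed f) (hV.union hW).isClosed_compl))
    · rintro x y z ⟨h1, h1'⟩ ⟨h2, h2'⟩
      refine ⟨gRel_trans f _ _ _ h1 h2, ?_⟩
      by_cases hxz : (x, z) ∈ V ×ˢ W
      swap
      · exact Or.inl hxz
      right
      by_cases hyV : y ∈ V
      · rcases h2' with h2' | ⟨r, hr, hr1, hr2⟩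
        · exact absurd ⟨hyV, hxz.2⟩ h2'
        · exact ⟨r, hr, gRel_trans f _ _ _ h1 hr1, hr2⟩
      by_cases hyW : y ∈ W
      · rcases h1' with h1' | ⟨r, hr, hr1, hr2⟩
        · exact absurd ⟨hxz.1, hyW⟩ h1'
        · exact ⟨r, hr, hr1, gRel_trans f _ _ _ hr2 h2⟩
      · exact ⟨y, fun h => h.elim hyV hyW, h1, h2⟩
  rcases (key h).2 with h | h
  · exact absurd ⟨ha, hb⟩ h
  · exact h

theorem fh_step {X : Type*} [TopologicalSpace X] [LocallyCompactSpace X] [T2Space X]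
    {Xh : Type*} [TopologicalSpace Xh] [T2Space Xh]
    (j : X → Xh) (hj : Topology.IsEmbedding j) (hopen : IsOpen (Set.range j))
    (f : Set (X × X)) (hf : IsClosed f)
    (hplus : ∀ A : Set X, IsCompact A → IsCompact (relImage f A))
    (x : X) (b : Xh) (h : (j x, b) ∈ closure (Prod.map j j '' f)) :
    ∃ y, j y = b ∧ (x, y) ∈ f := by
  obtain ⟨A, hA, hxA⟩ := exists_compact_mem_nhds x
  have hoe : Topology.IsOpenEmbedding j := ⟨hj, hopen⟩
  have hO : IsOpen (j '' interior A) := hoe.isOpenMap _ isOpen_interior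
  have hK : IsCompact (Prod.map j j '' ((A ×ˢ relImage f A) ∩ f)) :=
    ((hA.prod (hplus A hA)).inter_right hf).image (hj.continuous.prodMap hj.continuous)
  have hcl : IsClosed ((j '' interior A)ᶜ ×ˢ (Set.univ : Set Xh) ∪
      Prod.map j j '' ((A ×ˢ relImage f A) ∩ f)) :=
    (hO.isClosed_compl.prod isClosed_univ).union hK.isClosed
  have hsub := closure_minimal (s := Prod.map j j '' f) (by
    rintro _ ⟨⟨u, v⟩, huv, rfl⟩
    by_cases hu : u ∈ A
    · exact Or.inr ⟨(u, v), ⟨⟨hu, u, hu, huv⟩, huv⟩, rfl⟩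
    · refine Or.inl ⟨?_, trivial⟩
      rintro ⟨u', hu', he⟩
      exact hu (hj.injective he ▸ interior_subset hu')) hcl
  rcases hsub h with h | ⟨⟨u, v⟩, ⟨-, huv⟩, he⟩
  · exact absurd ⟨x, mem_interior_iff_mem_nhds.2 hxA, rfl⟩ h.1
  · obtain ⟨h1, h2⟩ := Prod.mk.inj he
    exact ⟨v, h2, hj.injective h1 ▸ huv⟩

/-- An almost dynamic proper compactification of a +proper closed relation
is dynamic, and the trichotomy for `𝒢f̂ ∩ 𝒢f̂⁻¹`-equivalence classes of generalized
recurrent points holds. -/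
theorem almostDynamic_isDynamic_and_trichotomy
    {X : Type*} [TopologicalSpace X] [LocallyCompactSpace X]
    [SigmaCompactSpace X] [T2Space X]
    {Xh : Type*} [TopologicalSpace Xh] [CompactSpace Xh] [T2Space Xh]
    (j : X → Xh) (hj : Topology.IsEmbedding j)
    (hopen : IsOpen (Set.range j)) (hdense : Dense (Set.range j))
    (f : Set (X × X)) (hf : IsClosed f)
    (hplus : ∀ A : Set X, IsCompact A → IsCompact (relImage f A))
    (fh : Set (Xh × Xh)) (hfh : fh = closure (Prod.map j j '' f))
    (had : ∀ x y : X,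
      ((j x, j y) ∈ Set.diagonal Xh ∪ gRel fh) ↔ ((x, y) ∈ Set.diagonal X ∪ gRel f)) :
    (∀ x y : X, (j x, j y) ∈ gRel fh ↔ (x, y) ∈ gRel f) ∧
    (∀ zh : Xh, (zh, zh) ∈ gRel fh →
      ∀ (Eh : Set Xh) (E : Set X),
        Eh = {w : Xh | (zh, w) ∈ gRel fh ∧ (w, zh) ∈ gRel fh} →
        E = {w : X | j w ∈ Eh} →
        -- (i) Ê is contained in X̂ ∖ X and E = ∅
        ((Eh ⊆ (Set.range j)ᶜ ∧ E = ∅) ∨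
        -- (ii) E is a noncompact 𝒢f ∩ 𝒢f⁻¹ equivalence class of a generalized
        -- recurrent point, whose closure in X̂ meets X̂ ∖ X and is contained in Ê
         (¬ IsCompact E ∧
            (∃ x ∈ E, (x, x) ∈ gRel f ∧
              E = {w : X | (x, w) ∈ gRel f ∧ (w, x) ∈ gRel f}) ∧
            (closure (j '' E) ∩ (Set.range j)ᶜ).Nonempty ∧
            closure (j '' E) ⊆ Eh) ∨
        -- (iii) Ê = E is a compact 𝒢f ∩ 𝒢f⁻¹ equivalence class
         (Eh = j '' E ∧ IsCompact E ∧
            ∃ x ∈ E, (x, x) ∈ gRel f ∧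
              E = {w : X | (x, w) ∈ gRel f ∧ (w, x) ∈ gRel f}))) := by
  have hstep := fh_step j hj hopen f hf hplus
  rw [← hfh] at hstep
  have hfhc : IsClosed fh := hfh ▸ isClosed_closure
  have T := gRel_trans fh
  have hdyn : ∀ x y : X, (j x, j y) ∈ gRel fh ↔ (x, y) ∈ gRel f := by
    have hne : ∀ x y : X, x ≠ y → (j x, j y) ∈ gRel fh → (x, y) ∈ gRel f := fun x y hxy h =>
      ((had x y).1 (Or.inr h)).resolve_left hxy
    intro x y
    constructor
    · intro h
      by_cases hxy : x = y
      swap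
      · exact hne x y hxy h
      subst hxy
      rcases gRel_step hfhc h with h1 | ⟨c, hc, hcx⟩
      · obtain ⟨y, hy, hxy⟩ := hstep _ _ h1
        rw [hj.injective hy] at hxy
        exact gRel_sub f hxy
      · obtain ⟨y, rfl, hxy⟩ := hstep _ _ hc
        by_cases hyx : y = x
        · rw [hyx] at hxy
          exact gRel_sub f hxy
        · exact gRel_trans f _ _ _ (gRel_sub f hxy) (hne y x hyx hcx)
    · intro h
      refine gRel_min (g := Prod.map j j ⁻¹' gRel fh) ?_ ?_ ?_ h
      · intro p hp
        refine gRel_sub fh ?_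
        rw [hfh]
        exact subset_closure ⟨p, hp, rfl⟩
      · exact (gRel_closed fh).preimage (hj.continuous.prodMap hj.continuous)
      · exact fun a b c h1 h2 => T _ _ _ h1 h2
  refine ⟨hdyn, ?_⟩
  intro zh hz Eh E hEh hE
  have hEhc : IsClosed Eh := by
    rw [hEh]
    exact ((gRel_closed fh).preimage (f := fun w : Xh => (zh, w)) (by fun_prop)).inter
      ((gRel_closed fh).preimage (f := fun w : Xh => (w, zh)) (by fun_prop))
  have himg : j '' E = Eh ∩ Set.range j := by
    rw [hE]
    exact Set.image_preimage_eq_inter_range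
  have hsubE : closure (j '' E) ⊆ Eh :=
    closure_minimal (himg ▸ Set.inter_subset_left) hEhc
  rcases E.eq_empty_or_nonempty with h0 | ⟨x, hx⟩
  · left
    refine ⟨?_, h0⟩
    rintro w hw ⟨y, rfl⟩
    have : y ∈ E := by rw [hE]; exact hw
    rw [h0] at this
    exact this
  right
  have hmem : ∀ w, w ∈ Eh ↔ (zh, w) ∈ gRel fh ∧ (w, zh) ∈ gRel fh := by
    intro w; rw [hEh]; rfl
  have hx' := hx
  rw [hE] at hx'
  have hxz := (hmem _).1 hx'
  have hcls : ∃ x ∈ E, (x, x) ∈ gRel f ∧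
      E = {w : X | (x, w) ∈ gRel f ∧ (w, x) ∈ gRel f} := by
    refine ⟨x, hx, (hdyn _ _).1 (T _ _ _ hxz.2 hxz.1), ?_⟩
    ext w
    rw [hE]
    simp only [Set.mem_setOf_eq, hmem, ← hdyn]
    exact ⟨fun h => ⟨T _ _ _ hxz.2 h.1, T _ _ _ h.2 hxz.1⟩,
      fun h => ⟨T _ _ _ hxz.1 h.1, T _ _ _ h.2 hxz.2⟩⟩
  by_cases hcomp : IsCompact E
  · right
    refine ⟨?_, hcomp, hcls⟩
    rw [himg]
    refine (Set.inter_eq_left.2 ?_).symm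
    intro w hw
    by_contra hwr
    have hK1 : IsCompact (j '' E) := hcomp.image hj.continuous
    have hK2 : IsCompact (Eh ∩ (Set.range j)ᶜ) := (hEhc.inter hopen.isClosed_compl).isCompact
    obtain ⟨V, W, hV, hW, hEV, hFW, hVW⟩ := generalized_tube_lemma hK1 hK2
      hfhc.isOpen_compl (by
        rintro ⟨a, b⟩ ⟨⟨a, ha, rfl⟩, hb⟩ hab
        obtain ⟨y, hy, -⟩ := hstep _ _ hab
        exact hb.2 ⟨y, hy⟩)
    have hwz := (hmem _).1 hw
    obtain ⟨r, hr, hr1, hr2⟩ := gRel_pass hV hW hVW (T _ _ _ hxz.2 hwz.1)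
      (hEV ⟨x, hx, rfl⟩) (hFW ⟨hw, hwr⟩)
    have hrE : r ∈ Eh := (hmem r).2 ⟨T _ _ _ hxz.1 hr1, T _ _ _ hr2 hwz.2⟩
    by_cases hrr : r ∈ Set.range j
    · exact hr (Or.inl (hEV (himg ▸ ⟨hrE, hrr⟩)))
    · exact hr (Or.inr (hFW ⟨hrE, hrr⟩))
  · left
    refine ⟨hcomp, hcls, ?_, hsubE⟩
    by_contra hne
    apply hcomp
    rw [hj.isCompact_iff]
    have : j '' E = closure (j '' E) := by
      refine subset_closure.antisymm fun w hw => ?_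
      rw [himg]
      refine ⟨hsubE hw, ?_⟩
      by_contra hwr
      exact hne ⟨w, hw, hwr⟩
    rw [this]
    exact isClosed_closure.isCompact
end

section
/- Let f be a homeomorphism of a locally compact, σ-compact Hausdorff space X. Then there exist a compact Hausdorff space X̂, a topological embedding j : X → X̂ with j(X) open and dense in X̂, and a homeomorphism f̂ of X̂, such that: f̂ ∘ j = j ∘ f; every point of X̂ ∖ j(X) is a fixed point of f̂; and for all x, y ∈ X, (j x, j y) ∈ 𝒢(graph f̂) if and only if (x,y) ∈ 𝒢(graph f). Moreover, if X is metrizable then X̂ can be chosen to be metrizable. -/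
/-- `(Xh, j, fh)` is a proper compactification of the reversible cascade `(X, f)` by a
homeomorphism `fh` extending `f`, fixing every point at infinity, and introducing no
new generalized recurrence: `(j x, j y) ∈ 𝒢(graph fh) ↔ (x,y) ∈ 𝒢(graph f)`. -/
def IsStoppedCascadeCompactification {X : Type u} [TopologicalSpace X] (f : X → X)
    (Xh : Type u) [TopologicalSpace Xh] (j : X → Xh) (fh : Xh → Xh) : Prop :=
  CompactSpace Xh ∧ T2Space Xh ∧ Topology.IsEmbedding j ∧
    IsOpen (Set.range j) ∧ Dense (Set.range j) ∧
    IsHomeomorph fh ∧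
    (∀ x : X, fh (j x) = j (f x)) ∧
    (∀ z : Xh, z ∉ Set.range j → fh z = z) ∧
    (∀ x y : X,
      (j x, j y) ∈ gRel {p : Xh × Xh | p.2 = fh p.1} ↔
        (x, y) ∈ gRel {p : X × X | p.2 = f p.1})

section StoppedProof

open Set Filter Topology

section StoppedAux

variable {X : Type*} [TopologicalSpace X]

/-- down sets of a relation -/
def IsDn (G : Set (X × X)) (A : Set X) : Prop := ∀ x y, (x, y) ∈ G → y ∈ A → x ∈ A

theorem sep_step [LocallyCompactSpace X] [T2Space X] (G : Set (X × X)) (hG : IsClosed G)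
    (F H : Set X) (hF : IsClosed F) (hH : IsClosed H) (A B : Set X) (hA : IsCompact A)
    (hB : IsCompact B) (hAB : ∀ a ∈ A, ∀ b ∈ B, (b, a) ∉ G) (hAH : Disjoint A H)
    (hBF : Disjoint B F) :
    ∃ N M : Set X, IsCompact N ∧ IsCompact M ∧ A ⊆ interior N ∧ B ⊆ interior M ∧
      (∀ a ∈ N, ∀ b ∈ M, (b, a) ∉ G) ∧ Disjoint N H ∧ Disjoint M F := by
  have hW : IsOpen {p : X × X | (p.2, p.1) ∉ G} :=
    (hG.preimage continuous_swap).isOpen_compl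
  obtain ⟨U, V, hU, hV, hAU, hBV, hUV⟩ := generalized_tube_lemma hA hB hW
    (fun p hp => hAB p.1 hp.1 p.2 hp.2)
  obtain ⟨N, hN, hAN, hNU⟩ := exists_compact_between hA (hU.inter hH.isOpen_compl)
    (subset_inter hAU hAH.subset_compl_right)
  obtain ⟨M, hM, hBM, hMV⟩ := exists_compact_between hB (hV.inter hF.isOpen_compl)
    (subset_inter hBV hBF.subset_compl_right)
  refine ⟨N, M, hN, hM, hAN, hBM, fun a ha b hb => ?_, ?_, ?_⟩
  · exact hUV (Set.mk_mem_prod (hNU ha).1 (hMV hb).1)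
  · exact Set.disjoint_left.2 fun x hx => (hNU hx).2
  · exact Set.disjoint_left.2 fun x hx => (hMV hx).2

theorem dn_closed [T2Space X] (G : Set (X × X)) (hG : IsClosed G) (N K : Set X)
    (hN : IsCompact N) (hK : IsCompact K) : IsCompact {x | x ∈ K ∧ ∃ a ∈ N, (x, a) ∈ G} := by
  have := ((hK.prod hN).inter_right hG).image continuous_fst
  convert this using 1
  ext x
  constructor
  · rintro ⟨hx, a, ha, h⟩
    exact ⟨(x, a), ⟨⟨hx, ha⟩, h⟩, rfl⟩
  · rintro ⟨⟨y, a⟩, ⟨⟨hx, ha⟩, h⟩, rfl⟩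
    exact ⟨hx, a, ha, h⟩

theorem up_closed [T2Space X] (G : Set (X × X)) (hG : IsClosed G) (N K : Set X)
    (hN : IsCompact N) (hK : IsCompact K) : IsCompact {x | x ∈ K ∧ ∃ a ∈ N, (a, x) ∈ G} :=
  dn_closed {p : X × X | (p.2, p.1) ∈ G} (hG.preimage continuous_swap) N K hN hK

theorem preorder_normal [LocallyCompactSpace X] [SigmaCompactSpace X] [T2Space X]
    (G : Set (X × X)) (hG : IsClosed G) (hr : ∀ x, (x, x) ∈ G)
    (ht : ∀ x y z, (x, y) ∈ G → (y, z) ∈ G → (x, z) ∈ G)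
    (F H : Set X) (hF : IsClosed F) (hH : IsClosed H) (hFd : IsDn G F)
    (hHu : ∀ x y, (x, y) ∈ G → x ∈ H → y ∈ H) (hFH : Disjoint F H) :
    ∃ A B : Set X, IsOpen A ∧ IsOpen B ∧ IsDn G A ∧ IsDn G Bᶜ ∧ F ⊆ A ∧ H ⊆ B ∧
      Disjoint A B := by
  let K : CompactExhaustion X := default
  rw [Set.disjoint_left] at hFH
  let Q : Set X × Set X → Prop := fun p => IsCompact p.1 ∧ IsCompact p.2 ∧
    (∀ a ∈ p.1, ∀ b ∈ p.2, (b, a) ∉ G) ∧ Disjoint p.1 H ∧ Disjoint p.2 F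
  have step : ∀ (n : ℕ) (p : {p // Q p}), ∃ q : {q // Q q}, ∃ N M : Set X,
      p.1.1 ⊆ interior N ∧ p.1.2 ⊆ interior M ∧
      q.1.1 = {x | x ∈ K n ∧ ∃ a ∈ N, (x, a) ∈ G} ∪ (K n ∩ F) ∧
      q.1.2 = {x | x ∈ K n ∧ ∃ a ∈ M, (a, x) ∈ G} ∪ (K n ∩ H) := by
    rintro n ⟨⟨A, B⟩, hA, hB, hAB, hAH, hBF⟩
    obtain ⟨N, M, hN, hM, hAN, hBM, hNM, hNH, hMF⟩ :=
      sep_step G hG F H hF hH A B hA hB hAB hAH hBF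
    rw [Set.disjoint_left] at hNH hMF
    refine ⟨⟨({x | x ∈ K n ∧ ∃ a ∈ N, (x, a) ∈ G} ∪ (K n ∩ F),
      {x | x ∈ K n ∧ ∃ a ∈ M, (a, x) ∈ G} ∪ (K n ∩ H)),
      (dn_closed G hG N _ hN (K.isCompact n)).union ((K.isCompact n).inter_right hF),
      (up_closed G hG M _ hM (K.isCompact n)).union ((K.isCompact n).inter_right hH), ?_, ?_, ?_⟩,
      N, M, hAN, hBM, rfl, rfl⟩
    · rintro a (⟨-, a', ha', ha⟩ | ⟨-, ha⟩) b (⟨-, b', hb', hb⟩ | ⟨-, hb⟩) hba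
      · exact hNM a' ha' b' hb' (ht _ _ _ hb (ht _ _ _ hba ha))
      · exact hNH ha' (hHu _ _ (ht _ _ _ hba ha) hb)
      · exact hMF hb' (hFd _ _ (ht _ _ _ hb hba) ha)
      · exact hFH ha (hHu _ _ hba hb)
    · rw [Set.disjoint_left]
      rintro a (⟨-, a', ha', ha⟩ | ⟨-, ha⟩) h
      · exact hNH ha' (hHu _ _ ha h)
      · exact hFH ha h
    · rw [Set.disjoint_left]
      rintro a (⟨-, a', ha', ha⟩ | ⟨-, ha⟩) h
      · exact hMF ha' (hFd _ _ ha h)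
      · exact hFH h ha
  choose nx N M hN hM hq1 hq2 using step
  let s : ℕ → {p // Q p} := fun n => Nat.rec ⟨(∅, ∅), by simp [Q]⟩ (fun n p => nx n p) n
  have hs : ∀ n, s (n + 1) = nx n (s n) := fun n => rfl
  have hsK : ∀ n, (s n).1.1 ⊆ K n ∧ (s n).1.2 ⊆ K n := by
    intro n
    cases n with
    | zero => exact ⟨empty_subset _, empty_subset _⟩
    | succ n =>
      rw [hs, hq1, hq2]
      constructor
      · rintro x (h | h)
        · exact K.subset_succ _ h.1
        · exact K.subset_succ _ h.1
      · rintro x (h | h)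
        · exact K.subset_succ _ h.1
        · exact K.subset_succ _ h.1
  have hm1 : Monotone fun n => (s n).1.1 := by
    refine monotone_nat_of_le_succ fun n x hx => ?_
    rw [hs, hq1]
    exact Or.inl ⟨(hsK n).1 hx, x, interior_subset (hN _ _ hx), hr x⟩
  have hm2 : Monotone fun n => (s n).1.2 := by
    refine monotone_nat_of_le_succ fun n x hx => ?_
    rw [hs, hq2]
    exact Or.inl ⟨(hsK n).2 hx, x, interior_subset (hM _ _ hx), hr x⟩
  refine ⟨⋃ n, (s n).1.1, ⋃ n, (s n).1.2, ?_, ?_, ?_, ?_, ?_, ?_, ?_⟩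
  · refine isOpen_iff_mem_nhds.2 fun x hx => ?_
    obtain ⟨n, hn⟩ := mem_iUnion.1 hx
    obtain ⟨m, hmx⟩ := K.exists_mem_nhds x
    have h1 := hm1 (le_max_left n m) hn
    have h2 : K (max n m) ∈ 𝓝 x := mem_of_superset hmx (K.subset (le_max_right n m))
    filter_upwards [h2, mem_interior_iff_mem_nhds.1 (hN (max n m) _ h1)] with y hy hy'
    refine mem_iUnion.2 ⟨max n m + 1, ?_⟩
    rw [hs, hq1]
    exact Or.inl ⟨hy, y, hy', hr y⟩
  · refine isOpen_iff_mem_nhds.2 fun x hx => ?_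
    obtain ⟨n, hn⟩ := mem_iUnion.1 hx
    obtain ⟨m, hmx⟩ := K.exists_mem_nhds x
    have h1 := hm2 (le_max_left n m) hn
    have h2 : K (max n m) ∈ 𝓝 x := mem_of_superset hmx (K.subset (le_max_right n m))
    filter_upwards [h2, mem_interior_iff_mem_nhds.1 (hM (max n m) _ h1)] with y hy hy'
    refine mem_iUnion.2 ⟨max n m + 1, ?_⟩
    rw [hs, hq2]
    exact Or.inl ⟨hy, y, hy', hr y⟩
  · intro x y hxy hy
    obtain ⟨n, hn⟩ := mem_iUnion.1 hy
    obtain ⟨m, hmx⟩ := K.exists_mem x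
    refine mem_iUnion.2 ⟨max n m + 1, ?_⟩
    rw [hs, hq1]
    exact Or.inl ⟨K.subset (le_max_right n m) hmx, y,
      interior_subset (hN _ _ (hm1 (le_max_left n m) hn)), hxy⟩
  · intro y x hxy hx hy
    apply hx
    obtain ⟨n, hn⟩ := mem_iUnion.1 hy
    obtain ⟨m, hmx⟩ := K.exists_mem x
    refine mem_iUnion.2 ⟨max n m + 1, ?_⟩
    rw [hs, hq2]
    exact Or.inl ⟨K.subset (le_max_right n m) hmx, y,
      interior_subset (hM _ _ (hm2 (le_max_left n m) hn)), hxy⟩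
  · intro x hx
    obtain ⟨m, hmx⟩ := K.exists_mem x
    refine mem_iUnion.2 ⟨m + 1, ?_⟩
    rw [hs, hq1]
    exact Or.inr ⟨hmx, hx⟩
  · intro x hx
    obtain ⟨m, hmx⟩ := K.exists_mem x
    refine mem_iUnion.2 ⟨m + 1, ?_⟩
    rw [hs, hq2]
    exact Or.inr ⟨hmx, hx⟩
  · rw [Set.disjoint_left]
    intro x hx hy
    obtain ⟨n, hn⟩ := mem_iUnion.1 hx
    obtain ⟨m, hm⟩ := mem_iUnion.1 hy
    exact (s (max n m)).2.2.2.1 x (hm1 (le_max_left n m) hn) x (hm2 (le_max_right n m) hm) (hr x)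

theorem cu_approx_mono (G : Set (X × X)) (P : Set X → Set X → Prop)
    (hP : ∀ c u, P c u → IsDn G u) (n : ℕ) (c : Urysohns.CU P) (x y : X) (h : (x, y) ∈ G) :
    c.approx n x ≤ c.approx n y := by
  induction n generalizing c with
  | zero =>
    by_cases hx : x ∈ c.U
    · calc c.approx 0 x = 0 := by simp [Urysohns.CU.approx, hx]
        _ ≤ _ := c.approx_nonneg 0 y
    · have hy : y ∉ c.U := fun hy => hx (hP _ _ c.P_C_U x y h hy)
      rw [c.approx_of_notMem_U 0 hx, c.approx_of_notMem_U 0 hy]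
  | succ n ih =>
    simp only [Urysohns.CU.approx]
    exact midpoint_le_midpoint (ih _) (ih _)

theorem exists_mono_fun [LocallyCompactSpace X] [SigmaCompactSpace X] [T2Space X]
    (G : Set (X × X)) (hG : IsClosed G) (hr : ∀ x, (x, x) ∈ G)
    (ht : ∀ x y z, (x, y) ∈ G → (y, z) ∈ G → (x, z) ∈ G) (u v : X) (huv : (u, v) ∉ G) :
    ∃ L : X → ℝ, Continuous L ∧ (∀ x, 0 ≤ L x) ∧ (∀ x, L x ≤ 1) ∧
      (∀ x y, (x, y) ∈ G → L x ≤ L y) ∧ L u = 1 ∧ L v = 0 := by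
  let P : Set X → Set X → Prop := fun c w => IsDn G w ∧ ∃ F, IsClosed F ∧ IsDn G F ∧ c ⊆ F ∧ F ⊆ w
  let c : Urysohns.CU P :=
    { C := {x | (x, v) ∈ G}
      U := {x | (u, x) ∈ G}ᶜ
      P_C_U := by
        refine ⟨fun x y hxy hy hx => hy (ht _ _ _ hx hxy), {x | (x, v) ∈ G}, ?_,
          fun x y hxy hy => ht _ _ _ hxy hy, subset_rfl, fun x hx hx' => huv (ht _ _ _ hx' hx)⟩
        exact hG.preimage (by fun_prop : Continuous fun x : X => (x, v))
      closed_C := hG.preimage (by fun_prop : Continuous fun x : X => (x, v))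
      open_U := (hG.preimage (by fun_prop : Continuous fun x : X => (u, x))).isOpen_compl
      subset := fun x hx hx' => huv (ht _ _ _ hx' hx)
      hP := by
        rintro c w hc ⟨hw, F, hF, hFd, hcF, hFw⟩ hwo hcw
        obtain ⟨A, B, hA, hB, hAd, hBd, hFA, hHB, hAB⟩ := preorder_normal G hG hr ht F wᶜ hF
          hwo.isClosed_compl hFd (fun x y hxy hx hy => hx (hw _ _ hxy hy))
          (Set.disjoint_left.2 fun x hx hx' => hx' (hFw hx))
        have hcl : closure A ⊆ Bᶜ := closure_minimal hAB.subset_compl_right hB.isClosed_compl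
        have hBw : Bᶜ ⊆ w := compl_subset_comm.1 hHB
        exact ⟨A, hA, hcF.trans hFA, hcl.trans hBw, ⟨hAd, F, hF, hFd, hcF, hFA⟩,
          hw, Bᶜ, hB.isClosed_compl, hBd, hcl, hBw⟩ }
  refine ⟨c.lim, c.continuous_lim, c.lim_nonneg, c.lim_le_one, fun x y hxy => ?_,
    c.lim_of_notMem_U u fun h => h (hr u), c.lim_of_mem_C v (hr v)⟩
  exact le_of_tendsto_of_tendsto' (c.tendsto_approx_atTop x) (c.tendsto_approx_atTop y)
    fun n => cu_approx_mono G P (fun _ _ h => h.1) n c x y hxy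

end StoppedAux

section StoppedAux2

variable {X : Type*} [TopologicalSpace X]

theorem exists_rho [LocallyCompactSpace X] [SigmaCompactSpace X] [T2Space X]
    (g : X → X) (hg : Continuous g) :
    ∃ ρ : X → ℝ, Continuous ρ ∧ (∀ x, 0 ≤ ρ x) ∧ (∀ x, ρ (g x) ≤ ρ x + 2) ∧
      Tendsto ρ (cocompact X) atTop := by
  have step : ∀ (n : ℕ) (p : {s : Set X // IsCompact s}), ∃ q : {s : Set X // IsCompact s},
      p.1 ∪ g '' p.1 ∪ compactCovering X n ⊆ interior q.1 := by
    rintro n ⟨p, hp⟩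
    obtain ⟨L, hL, h, -⟩ := exists_compact_between
      ((hp.union (hp.image hg)).union (isCompact_compactCovering X n)) isOpen_univ (subset_univ _)
    exact ⟨⟨L, hL⟩, h⟩
  choose nx hnx using step
  let s : ℕ → {s : Set X // IsCompact s} := fun n => Nat.rec ⟨∅, isCompact_empty⟩ (fun n p => nx n p) n
  have hs : ∀ n, (s n).1 ∪ g '' (s n).1 ∪ compactCovering X n ⊆ interior (s (n + 1)).1 :=
    fun n => hnx n (s n)
  let K : CompactExhaustion X :=
    { toFun := fun n => (s n).1
      isCompact' := fun n => (s n).2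
      subset_interior_succ' := fun n =>
        (subset_union_left.trans subset_union_left).trans (hs n)
      iUnion_eq' := by
        refine eq_univ_of_forall fun x => ?_
        obtain ⟨n, hn⟩ := exists_mem_compactCovering x
        exact mem_iUnion.2 ⟨n + 1, interior_subset (hs n (Or.inr hn))⟩ }
  have hK : ∀ n x, x ∈ K n → g x ∈ K (n + 1) := fun n x hx =>
    interior_subset (hs n (Or.inl (Or.inr ⟨x, hx, rfl⟩)))
  obtain ⟨ρ, hρ⟩ := exists_continuous_forall_mem_convex_of_local_const
    (t := fun x : X => Icc (K.find x : ℝ) (K.find x + 1)) (fun x => convex_Icc _ _) (by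
      intro x
      refine ⟨(K.find x : ℝ) + 1, ?_⟩
      have h1 : ∀ᶠ y in 𝓝 x, K.find y ≤ K.find x + 1 := by
        filter_upwards [mem_interior_iff_mem_nhds.1 (K.subset_interior_succ _ (K.mem_find x))]
          with y hy using K.mem_iff_find_le.1 hy
      have h2 : ∀ᶠ y in 𝓝 x, K.find x ≤ K.find y := by
        rcases Nat.eq_zero_or_pos (K.find x) with h | h
        · simp [h]
        · have : x ∉ K (K.find x - 1) := fun hx => by
            have := K.mem_iff_find_le.1 hx
            omega
          filter_upwards [(K.isCompact _).isClosed.isOpen_compl.mem_nhds this] with y hy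
          by_contra hlt
          exact hy (K.mem_iff_find_le.2 (by omega))
      filter_upwards [h1, h2] with y hy1 hy2
      constructor
      · exact_mod_cast hy1
      · have : (K.find x : ℝ) ≤ K.find y := by exact_mod_cast hy2
        linarith)
  refine ⟨ρ, ρ.continuous, fun x => le_trans (Nat.cast_nonneg _) (hρ x).1, fun x => ?_, ?_⟩
  · have h1 : K.find (g x) ≤ K.find x + 1 := K.mem_iff_find_le.1 (hK _ _ (K.mem_find x))
    have h2 : (K.find (g x) : ℝ) ≤ K.find x + 1 := by exact_mod_cast h1
    linarith [(hρ x).1, (hρ (g x)).2]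
  · refine tendsto_atTop.2 fun b => ?_
    obtain ⟨n, hn⟩ := exists_nat_ge b
    filter_upwards [(K.isCompact n).compl_mem_cocompact] with x hx
    have : n < K.find x := by
      by_contra h
      exact hx (K.mem_iff_find_le.2 (by omega))
    have : (n : ℝ) < K.find x := by exact_mod_cast this
    linarith [(hρ x).1]

theorem exists_slow [LocallyCompactSpace X] [SigmaCompactSpace X] [T2Space X]
    (f g : X → X) (hg : Continuous g) (hgf : ∀ x, g (f x) = x)
    (L : X → ℝ) (hL : Continuous L) (hL0 : ∀ x, 0 ≤ L x) (hL1 : ∀ x, L x ≤ 1)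
    (hLf : ∀ x, L x ≤ L (f x)) (u v : X) (hu : L u = 1) (hv : L v = 0) :
    ∃ M : X → ℝ, Continuous M ∧ (∀ x, 0 ≤ M x) ∧ (∀ x, M x ≤ 1) ∧ (∀ x, M x ≤ M (f x)) ∧
      Tendsto (fun x => M (f x) - M x) (cocompact X) (𝓝 0) ∧ M v < M u := by
  obtain ⟨ρ, hρ, hρ0, hρg, hρt⟩ := exists_rho g hg
  let ε : X → ℝ := fun x => 1 / (1 + ρ x)
  have hε : Continuous ε := continuous_const.div (by fun_prop) fun x => by
    have := hρ0 x
    positivity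
  have hε0 : ∀ x, 0 < ε x := fun x => by
    have := hρ0 x
    positivity
  have hρk : ∀ (k : ℕ) x, ρ (g^[k] x) ≤ ρ x + 2 * k := by
    intro k
    induction k with
    | zero => intro x; simp
    | succ k ih =>
      intro x
      rw [Function.iterate_succ_apply']
      have := hρg (g^[k] x)
      have := ih x
      push_cast
      linarith
  let c : ℕ → X → ℝ := fun k x => L (g^[k] x) + ∑ i ∈ Finset.range k, ε (g^[i+1] x)
  have hgk : ∀ k, Continuous (g^[k]) := fun k => hg.iterate k
  have hc : ∀ k, Continuous (c k) := fun k =>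
    (hL.comp (hgk k)).add (continuous_finsetSum _ fun i _ => hε.comp (hgk (i + 1)))
  have hc0 : ∀ k x, 0 ≤ c k x := fun k x =>
    add_nonneg (hL0 _) (Finset.sum_nonneg fun i _ => (hε0 _).le)
  have hc00 : ∀ x, c 0 x = L x := fun x => by simp [c]
  have hcs : ∀ k x, c (k + 1) (f x) = c k x + ε x := by
    intro k x
    simp only [c]
    rw [Finset.sum_range_succ']
    simp only [Function.iterate_succ_apply, hgf]
    simp only [Function.iterate_zero, id]
    ring
  have hbdd : ∀ x, BddBelow (range fun k => c k x) := fun x => ⟨0, by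
    rintro _ ⟨k, rfl⟩
    exact hc0 k x⟩
  let M : X → ℝ := fun x => ⨅ k, c k x
  have hMle : ∀ k x, M x ≤ c k x := fun k x => ciInf_le (hbdd x) k
  have hM0 : ∀ x, 0 ≤ M x := fun x => le_ciInf fun k => hc0 k x
  have hM1 : ∀ x, M x ≤ 1 := fun x => (hMle 0 x).trans ((hc00 x).le.trans (hL1 x))
  have hMf : ∀ x, M x ≤ M (f x) := by
    intro x
    refine le_ciInf fun k => ?_
    cases k with
    | zero => rw [hc00]; exact (hMle 0 x).trans ((hc00 x).le.trans (hLf x))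
    | succ k => rw [hcs]; linarith [hMle k x, hε0 x]
  have hMs : ∀ x, M (f x) - M x ≤ ε x := by
    intro x
    have : M (f x) - ε x ≤ M x := le_ciInf fun k => by
      linarith [hMle (k + 1) (f x), hcs k x]
    linarith
  have hMc : Continuous M := by
    refine continuous_iff_continuousAt.2 fun x₀ => ?_
    obtain ⟨m, hm⟩ : ∃ m : ℝ, m = ρ x₀ + 1 := ⟨_, rfl⟩
    have hm0 : 0 ≤ m := by linarith [hρ0 x₀]
    have hnb : ∀ᶠ x in 𝓝 x₀, ρ x < m := hρ.continuousAt.eventually_lt_const (by linarith)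
    have hdiv := Real.tendsto_sum_range_one_div_nat_succ_atTop
    obtain ⟨N, hN⟩ := (tendsto_atTop.1 hdiv (m + 3)).exists
    have hbig : ∀ x, ρ x < m → ∀ k, N ≤ k → 1 ≤ c k x := by
      intro x hx k hk
      have h1 : ∑ i ∈ Finset.range N, (1 / (m + 3)) * (1 / ((i : ℝ) + 1)) ≤
          ∑ i ∈ Finset.range N, ε (g^[i+1] x) := by
        refine Finset.sum_le_sum fun i _ => ?_
        rw [div_mul_div_comm, one_mul]
        refine one_div_le_one_div_of_le (by linarith [hρ0 (g^[i+1] x)]) ?_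
        have := hρk (i + 1) x
        push_cast at this
        have hi : (0 : ℝ) ≤ i := Nat.cast_nonneg i
        nlinarith [mul_nonneg hm0 hi]
      rw [← Finset.mul_sum] at h1
      have h2 : 1 ≤ 1 / (m + 3) * ∑ i ∈ Finset.range N, (1 / ((i : ℝ) + 1)) := by
        rw [div_mul_eq_mul_div, one_mul, le_div_iff₀ (by linarith)]
        linarith
      have h3 : ∑ i ∈ Finset.range N, ε (g^[i+1] x) ≤ ∑ i ∈ Finset.range k, ε (g^[i+1] x) :=
        Finset.sum_le_sum_of_subset_of_nonneg (Finset.range_mono hk) fun i _ _ => (hε0 _).le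
      have := hL0 (g^[k] x)
      simp only [c]
      linarith
    have hne : (Finset.range (N + 1)).Nonempty := ⟨0, by simp⟩
    have heq : M =ᶠ[𝓝 x₀] fun x => (Finset.range (N + 1)).inf' hne fun k => c k x := by
      filter_upwards [hnb] with x hx
      refine le_antisymm (Finset.le_inf' _ _ fun k _ => hMle k x) (le_ciInf fun k => ?_)
      by_cases hk : k < N + 1
      · exact Finset.inf'_le (fun k => c k x) (Finset.mem_range.2 hk)
      · calc _ ≤ c 0 x := Finset.inf'_le (fun k => c k x) (by simp)
          _ ≤ 1 := by rw [hc00]; exact hL1 x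
          _ ≤ c k x := hbig x hx k (by omega)
    refine ContinuousAt.congr ?_ heq.symm
    exact (Continuous.finset_inf'_apply hne fun k _ => hc k).continuousAt
  refine ⟨M, hMc, hM0, hM1, hMf, ?_, ?_⟩
  · refine squeeze_zero (fun x => sub_nonneg.2 (hMf x)) hMs ?_
    have : Tendsto (fun x => 1 + ρ x) (cocompact X) atTop :=
      tendsto_atTop_add_const_left _ _ hρt
    simp only [ε, one_div]
    exact this.inv_tendsto_atTop
  · have h1 : M v ≤ 0 := by
      have := hMle 0 v
      rwa [hc00, hv] at this
    have h2 : min 1 (ε (g u)) ≤ M u := by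
      refine le_ciInf fun k => ?_
      cases k with
      | zero => rw [hc00, hu]; exact min_le_left _ _
      | succ k =>
        refine (min_le_right _ _).trans ?_
        simp only [c]
        rw [Finset.sum_range_succ']
        have h3 := hL0 (g^[k+1] u)
        have h4 : 0 ≤ ∑ i ∈ Finset.range k, ε (g^[i+1+1] u) :=
          Finset.sum_nonneg fun i _ => (hε0 _).le
        simp only [zero_add, Function.iterate_one]
        linarith
    have h3 : 0 < min 1 (ε (g u)) := lt_min one_pos (hε0 _)
    linarith

end StoppedAux2


section StoppedAux3

theorem extend_zero_continuous {X Y : Type*} [TopologicalSpace X] [TopologicalSpace Y] [T2Space Y]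
    (j : X → Y) (hj : IsOpenEmbedding j) (g : X → ℝ) (hg : Continuous g)
    (hg0 : Tendsto g (cocompact X) (𝓝 0)) : Continuous (Function.extend j g 0) := by
  refine continuous_iff_continuousAt.2 fun z => ?_
  by_cases hz : z ∈ range j
  · obtain ⟨x, rfl⟩ := hz
    rw [← hj.continuousAt_iff]
    have : Function.extend j g 0 ∘ j = g := by
      ext x
      simp [hj.injective.extend_apply]
    rw [this]
    exact hg.continuousAt
  · have h0 : Function.extend j g 0 z = 0 := by
      rw [Function.extend_apply' _ _ _ (by simpa using hz)]
      rfl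
    rw [ContinuousAt, h0, Metric.tendsto_nhds]
    intro e he
    obtain ⟨K, hK, hKe⟩ := mem_cocompact.1 (Metric.tendsto_nhds.1 hg0 e he)
    have hcl : IsClosed (j '' K) := (hK.image hj.continuous).isClosed
    have hzK : z ∉ j '' K := fun h => hz (image_subset_range _ _ h)
    filter_upwards [hcl.isOpen_compl.mem_nhds hzK] with w hw
    by_cases hwr : w ∈ range j
    · obtain ⟨x, rfl⟩ := hwr
      rw [hj.injective.extend_apply]
      exact hKe fun hx => hw ⟨x, hx, rfl⟩
    · rw [Function.extend_apply' _ _ _ (by simpa using hwr)]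
      simpa using he

theorem compactification_of_family {X : Type u} [TopologicalSpace X] [LocallyCompactSpace X]
    [T2Space X] (f : X → X) (hf : IsHomeomorph f) (S : Set (X → ℝ))
    (hSc : ∀ h ∈ S, Continuous h) (hS01 : ∀ h ∈ S, ∀ x, h x ∈ Icc (0 : ℝ) 1)
    (hS0 : ∀ h ∈ S, Tendsto (fun x => h (f x) - h x) (cocompact X) (𝓝 0))
    (hSU : ∀ (x : X) (U : Set X), IsOpen U → x ∈ U → ∃ h ∈ S, h x ≠ 0 ∧ (∀ y, y ∉ U → h y = 0) ∧
      HasCompactSupport h)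
    (hSL : ∀ u v : X, (u, v) ∉ gRel {p : X × X | p.2 = f p.1} → u ≠ v →
      ∃ L ∈ S, (∀ x, L x ≤ L (f x)) ∧ L v < L u) :
    ∃ (Xh : Type u) (t : TopologicalSpace Xh) (j : X → Xh) (fh : Xh → Xh),
      @IsStoppedCascadeCompactification X _ f Xh t j fh ∧
        (S.Countable → @TopologicalSpace.MetrizableSpace Xh t) := by
  let e : X → (S → ℝ) := fun x h => h.1 x
  have he : Continuous e := continuous_pi fun h => hSc _ h.2
  have hcpt : IsCompact (closure (range e)) := by
    have h1 : IsCompact (Set.pi univ fun _ : S => Icc (0 : ℝ) 1) :=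
      isCompact_univ_pi fun _ => isCompact_Icc
    refine h1.of_isClosed_subset isClosed_closure (closure_minimal ?_ h1.isClosed)
    rintro _ ⟨x, rfl⟩ h -
    exact hS01 _ h.2 x
  let Y : Type u := closure (range e)
  have : CompactSpace Y := isCompact_iff_compactSpace.1 hcpt
  let j : X → Y := fun x => ⟨e x, subset_closure ⟨x, rfl⟩⟩
  have hjc : Continuous j := he.subtype_mk _
  have hind : IsInducing j := by
    rw [isInducing_iff_nhds]
    intro x
    refine le_antisymm (hjc.tendsto x).le_comap fun U hU => ?_
    obtain ⟨V, hVU, hV, hxV⟩ := mem_nhds_iff.1 hU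
    obtain ⟨h, hS, hx, hV0, -⟩ := hSU x V hV hxV
    refine ⟨{z : Y | z.1 ⟨h, hS⟩ ≠ 0}, ?_, fun y hy => hVU ?_⟩
    · have : Continuous fun z : Y => z.1 ⟨h, hS⟩ := (continuous_apply _).comp continuous_subtype_val
      exact (isOpen_ne_fun this continuous_const).mem_nhds hx
    · by_contra hyV
      exact hy (hV0 y hyV)
  have hemb : IsEmbedding j := hind.isEmbedding
  have hdense : Dense (range j) := by
    intro z
    rw [closure_subtype]
    have : Subtype.val '' range j = range e := by
      rw [← range_comp]
      rfl
    rw [this]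
    exact z.2
  have hopen : IsOpen (range j) := by
    rw [isOpen_iff_mem_nhds]
    rintro _ ⟨x, rfl⟩
    obtain ⟨h, hS, hx, -, hK⟩ := hSU x univ isOpen_univ trivial
    have hch : Continuous fun z : Y => z.1 ⟨h, hS⟩ :=
      (continuous_apply _).comp continuous_subtype_val
    have hop : IsOpen {z : Y | z.1 ⟨h, hS⟩ ≠ 0} := isOpen_ne_fun hch continuous_const
    refine mem_of_superset (hop.mem_nhds (x := j x) hx) ?_
    have hcl : IsClosed (j '' tsupport h) := (hK.isCompact.image hjc).isClosed
    have h1 : {z : Y | z.1 ⟨h, hS⟩ ≠ 0} ⊆ closure ({z : Y | z.1 ⟨h, hS⟩ ≠ 0} ∩ range j) :=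
      hdense.open_subset_closure_inter hop
    refine h1.trans ((closure_minimal ?_ hcl).trans (image_subset_range _ _))
    rintro _ ⟨hz, y, rfl⟩
    exact ⟨y, subset_tsupport _ hz, rfl⟩
  have hjo : IsOpenEmbedding j := ⟨hemb, hopen⟩
  let F : Y → (S → ℝ) := fun z h => z.1 h + Function.extend j (fun x => h.1 (f x) - h.1 x) 0 z
  have hFc : Continuous F := continuous_pi fun h =>
    ((continuous_apply _).comp continuous_subtype_val).add
      (extend_zero_continuous j hjo _ (((hSc _ h.2).comp hf.continuous).sub (hSc _ h.2))
        (hS0 _ h.2))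
  have hFj : ∀ x, F (j x) = e (f x) := by
    intro x
    ext h
    simp only [F, hjo.injective.extend_apply]
    simp [j, e]
  have hFn : ∀ z, z ∉ range j → F z = z.1 := by
    intro z hz
    ext h
    simp only [F]
    rw [Function.extend_apply' _ _ _ (by simpa using hz)]
    simp
  have hFm : ∀ z, F z ∈ closure (range e) := by
    intro z
    by_cases hz : z ∈ range j
    · obtain ⟨x, rfl⟩ := hz
      rw [hFj]
      exact subset_closure ⟨_, rfl⟩
    · rw [hFn z hz]
      exact z.2
  let fh : Y → Y := fun z => ⟨F z, hFm z⟩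
  have hfh : Continuous fh := hFc.subtype_mk _
  have hfj : ∀ x, fh (j x) = j (f x) := fun x => Subtype.ext (hFj x)
  have hfn : ∀ z, z ∉ range j → fh z = z := fun z hz => Subtype.ext (hFn z hz)
  have hbij : Function.Bijective fh := by
    constructor
    · intro z w hzw
      by_cases hz : z ∈ range j <;> by_cases hw : w ∈ range j
      · obtain ⟨x, rfl⟩ := hz
        obtain ⟨y, rfl⟩ := hw
        rw [hfj, hfj] at hzw
        rw [hf.injective (hjo.injective hzw)]
      · obtain ⟨x, rfl⟩ := hz
        rw [hfj, hfn w hw] at hzw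
        exact (hw ⟨_, hzw⟩).elim
      · obtain ⟨y, rfl⟩ := hw
        rw [hfj, hfn z hz] at hzw
        exact (hz ⟨_, hzw.symm⟩).elim
      · rwa [hfn z hz, hfn w hw] at hzw
    · intro z
      by_cases hz : z ∈ range j
      · obtain ⟨x, rfl⟩ := hz
        obtain ⟨y, rfl⟩ := hf.surjective x
        exact ⟨j y, hfj y⟩
      · exact ⟨z, hfn z hz⟩
  have hhom : IsHomeomorph fh := isHomeomorph_iff_continuous_bijective.2 ⟨hfh, hbij⟩
  refine ⟨Y, inferInstance, j, fh, ⟨inferInstance, inferInstance, hemb, hopen, hdense, hhom, hfj,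
    hfn, fun x y => ⟨fun hxy => ?_, fun hxy => ?_⟩⟩, fun hS => ?_⟩
  · by_contra hn
    have hne : f x ≠ y := by
      rintro rfl
      exact hn fun g hg => hg.1 rfl
    have hn' : (f x, y) ∉ gRel {p : X × X | p.2 = f p.1} := by
      intro h
      exact hn fun g hg => hg.2.2 x (f x) y (hg.1 (show f x = f x from rfl)) (h g hg)
    obtain ⟨L, hLS, hL, hlt⟩ := hSL _ _ hn' hne
    have hmono : ∀ z : Y, z.1 ⟨L, hLS⟩ ≤ (fh z).1 ⟨L, hLS⟩ := by
      intro z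
      by_cases hz : z ∈ range j
      · obtain ⟨w, rfl⟩ := hz
        rw [hfj]
        exact hL w
      · rw [hfn z hz]
    have hch : Continuous fun z : Y => z.1 ⟨L, hLS⟩ :=
      (continuous_apply _).comp continuous_subtype_val
    have := hxy {p : Y × Y | (fh p.1).1 ⟨L, hLS⟩ ≤ p.2.1 ⟨L, hLS⟩} ⟨?_, ?_, ?_⟩
    · have h2 : (fh (j x)).1 ⟨L, hLS⟩ ≤ (j y).1 ⟨L, hLS⟩ := this
      rw [hfj] at h2
      exact absurd h2 (not_le.2 hlt)
    · rintro ⟨z, w⟩ (h : w = fh z)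
      subst h
      exact le_refl ((fh z).1 ⟨L, hLS⟩)
    · exact isClosed_le (hch.comp (hfh.comp continuous_fst)) (hch.comp continuous_snd)
    · intro a b c hab hbc
      exact le_trans (le_trans hab (hmono b)) hbc
  · rintro g ⟨hg1, hg2, hg3⟩
    refine hxy {p : X × X | (j p.1, j p.2) ∈ g} ⟨?_, ?_, ?_⟩
    · rintro ⟨a, b⟩ (h : b = f a)
      subst h
      exact hg1 (hfj a).symm
    · exact hg2.preimage (by fun_prop)
    · intro a b c hab hbc
      exact hg3 _ _ _ hab hbc
  · have : Countable S := hS.to_subtype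
    infer_instance

end StoppedAux3

section StoppedAux4

/-- the admissible functions -/
def StopFam {X : Type u} [TopologicalSpace X] (f : X → X) : Set (X → ℝ) :=
  {h | Continuous h ∧ (∀ x, h x ∈ Icc (0 : ℝ) 1) ∧
    Tendsto (fun x => h (f x) - h x) (cocompact X) (𝓝 0)}

variable {X : Type u} [TopologicalSpace X] [LocallyCompactSpace X] [T2Space X]

theorem stopFam_bump (f : X → X) (hf : IsHomeomorph f) (x : X) (U : Set X) (hU : IsOpen U)
    (hx : x ∈ U) : ∃ h ∈ StopFam f, h x ≠ 0 ∧ (∀ y, y ∉ U → h y = 0) ∧ HasCompactSupport h := by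
  obtain ⟨h, h1, h0, hc, h01⟩ := exists_continuous_one_zero_of_isCompact
    (isCompact_singleton (x := x)) hU.isClosed_compl (by simpa using hx)
  refine ⟨h, ⟨h.continuous, h01, ?_⟩, ?_, fun y hy => h0 hy, hc⟩
  · have ht : Tendsto h (cocompact X) (𝓝 0) := hc.is_zero_at_infty
    have ht2 := ht.comp (hf.isClosedEmbedding.tendsto_cocompact)
    simpa using ht2.sub ht
  · have := h1 (mem_singleton x)
    simp [this]

theorem stopFam_lyap [SigmaCompactSpace X] (f : X → X) (hf : IsHomeomorph f) (u v : X)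
    (huv : (u, v) ∉ gRel {p : X × X | p.2 = f p.1}) (hne : u ≠ v) :
    ∃ L ∈ StopFam f, (∀ x, L x ≤ L (f x)) ∧ L v < L u := by
  have hcl : IsClosed (gRel {p : X × X | p.2 = f p.1}) := isClosed_sInter fun g hg => hg.2.1
  obtain ⟨L, hL, hL0, hL1, hmono, hu, hv⟩ := exists_mono_fun
    (gRel {p : X × X | p.2 = f p.1} ∪ diagonal X) (hcl.union isClosed_diagonal)
    (fun x => Or.inr rfl) (by
      rintro x y z (h1 | h1) (h2 | h2)
      · exact Or.inl fun g hg => hg.2.2 _ _ _ (h1 g hg) (h2 g hg)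
      · obtain rfl : y = z := h2
        exact Or.inl h1
      · obtain rfl : x = y := h1
        exact Or.inl h2
      · obtain rfl : x = y := h1
        exact Or.inr h2) u v (by
      rintro (h | h)
      · exact huv h
      · exact hne h)
  have hLf : ∀ x, L x ≤ L (f x) := fun x => hmono _ _ (Or.inl fun g hg => hg.1 rfl)
  obtain ⟨M, hM, hM0, hM1, hMf, hMt, hlt⟩ := exists_slow f (hf.homeomorph f).symm
    (hf.homeomorph f).symm.continuous (fun x => (hf.homeomorph f).symm_apply_apply x) L hL hL0 hL1
    hLf u v hu hv
  exact ⟨M, ⟨hM, fun x => ⟨hM0 x, hM1 x⟩, hMt⟩, hMf, hlt⟩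

theorem stopFam_countable [SigmaCompactSpace X] [SecondCountableTopology X]
    (f : X → X) (hf : IsHomeomorph f) : ∃ S ⊆ StopFam f, S.Countable ∧
    (∀ (x : X) (U : Set X), IsOpen U → x ∈ U → ∃ h ∈ S, h x ≠ 0 ∧ (∀ y, y ∉ U → h y = 0) ∧
      HasCompactSupport h) ∧
    (∀ u v : X, (u, v) ∉ gRel {p : X × X | p.2 = f p.1} → u ≠ v →
      ∃ L ∈ S, (∀ x, L x ≤ L (f x)) ∧ L v < L u) := by
  obtain ⟨T, hT, hTc, hTU⟩ := TopologicalSpace.isOpen_biUnion_countable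
    {L | L ∈ StopFam f ∧ ∀ x, L x ≤ L (f x)} (fun L => {p : X × X | L p.2 < L p.1})
    (fun L hL => isOpen_lt (hL.1.1.comp continuous_snd) (hL.1.1.comp continuous_fst))
  have hB : ∀ U : Set X, ∃ R ⊆ {h | h ∈ StopFam f ∧ (∀ y, y ∉ U → h y = 0) ∧ HasCompactSupport h},
      R.Countable ∧ ⋃ h ∈ R, {x | h x ≠ 0} =
        ⋃ h ∈ {h | h ∈ StopFam f ∧ (∀ y, y ∉ U → h y = 0) ∧ HasCompactSupport h},
          {x | h x ≠ 0} := fun U =>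
    TopologicalSpace.isOpen_biUnion_countable _ (fun h : X → ℝ => {x | h x ≠ 0})
      (fun h hh => isOpen_ne_fun hh.1.1 continuous_const)
  choose R hR hRc hRU using hB
  refine ⟨T ∪ ⋃ U ∈ TopologicalSpace.countableBasis X, R U, ?_, ?_, ?_, ?_⟩
  · refine union_subset (fun L hL => (hT hL).1) (iUnion₂_subset fun U _ h hh => (hR U hh).1)
  · exact hTc.union ((TopologicalSpace.countable_countableBasis X).biUnion fun U _ => hRc U)
  · intro x V hV hx
    obtain ⟨U, hU, hxU, hUV⟩ :=
      (TopologicalSpace.isBasis_countableBasis X).exists_subset_of_mem_open hx hV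
    obtain ⟨h, hh, hx0, h0, hc⟩ := stopFam_bump f hf x U
      ((TopologicalSpace.isBasis_countableBasis X).isOpen hU) hxU
    have hmem : x ∈ ⋃ h ∈ R U, {x | h x ≠ 0} := by
      rw [hRU]
      exact mem_biUnion (x := h) ⟨hh, h0, hc⟩ hx0
    obtain ⟨h', hh', hx'⟩ := mem_iUnion₂.1 hmem
    exact ⟨h', Or.inr (mem_biUnion hU hh'), hx', fun y hy => (hR U hh').2.1 y fun h => hy (hUV h),
      (hR U hh').2.2⟩
  · intro u v huv hne
    obtain ⟨L, hL, hLf, hlt⟩ := stopFam_lyap f hf u v huv hne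
    have hmem : (u, v) ∈ ⋃ L ∈ T, {p : X × X | L p.2 < L p.1} := by
      rw [hTU]
      exact mem_biUnion (x := L) ⟨hL, hLf⟩ hlt
    obtain ⟨L', hL', h'⟩ := mem_iUnion₂.1 hmem
    exact ⟨L', Or.inl hL', (hT hL').2, h'⟩

end StoppedAux4

end StoppedProof

/-- Every homeomorphism `f` of a locally compact, σ-compact Hausdorff
space `X` admits a proper compactification by a homeomorphism which fixes every point
at infinity and is dynamic; if `X` is metrizable, the compactification can be chosen
metrizable. -/
theorem exists_stopped_cascade_compactification
    {X : Type u} [TopologicalSpace X] [LocallyCompactSpace X]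
    [SigmaCompactSpace X] [T2Space X]
    (f : X → X) (hf : IsHomeomorph f) :
    (∃ (Xh : Type u) (t : TopologicalSpace Xh) (j : X → Xh) (fh : Xh → Xh),
      @IsStoppedCascadeCompactification X _ f Xh t j fh) ∧
    (TopologicalSpace.MetrizableSpace X →
      ∃ (Xh : Type u) (t : TopologicalSpace Xh) (j : X → Xh) (fh : Xh → Xh),
        @IsStoppedCascadeCompactification X _ f Xh t j fh ∧
          @TopologicalSpace.MetrizableSpace Xh t) := by
  constructor
  · obtain ⟨Xh, t, j, fh, h, -⟩ := compactification_of_family f hf (StopFam f) (fun h hh => hh.1)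
      (fun h hh => hh.2.1) (fun h hh => hh.2.2) (stopFam_bump f hf) (stopFam_lyap f hf)
    exact ⟨Xh, t, j, fh, h⟩
  · intro hm
    letI := TopologicalSpace.metrizableSpaceMetric X
    have : SecondCountableTopology X := EMetric.secondCountable_of_sigmaCompact X
    obtain ⟨S, hS, hSc, h1, h2⟩ := stopFam_countable f hf
    obtain ⟨Xh, t, j, fh, h, h'⟩ := compactification_of_family f hf S (fun h hh => (hS hh).1)
      (fun h hh => (hS hh).2.1) (fun h hh => (hS hh).2.2) h1 h2
    exact ⟨Xh, t, j, fh, h, h' hSc⟩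
end
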